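/- Let q be a prime power, n ≥ 2, and let ℓ ∈ N with 2 ≤ ℓ < q. Let g ∈ F_q[x_1,…,x_{n-1}] be a polynomial of degree ℓ. For ρ ∈ F_q and a ∈ F_q^n, let C = {a + ρ·(λ, g(λ)) : λ ∈ F_q^{n-1}} ⊆ F_q^n. Let k, D, M ∈ N satisfy ℓ(D - w) < (M - w)q for all integers w with 0 ≤ w < k. Suppose P ∈ F_q[x_1,…,x_n] is a nonzero polynomial of degree at most D vanishing on C with multiplicity M. Then for every β ∈ Z_{≥0}^n with |β| < k, the polynomial P_{β,ρ}(s) := P^{(β)}(a + ρ·(s, g(s))) ∈ F_q[s_1,…,s_{n-1}] is the zero polynomial. -/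

import Mathlib

open MvPolynomial

/-- The β-th Hasse derivative of a multivariate polynomial `P`: the coefficient of `y^β`
in `P(x + y)`, where the outer variables are `y` and the coefficients are polynomials in `x`. -/
noncomputable def hasseDeriv {F : Type*} [CommRing F] {n : ℕ}
    (β : Fin n →₀ ℕ) (P : MvPolynomial (Fin n) F) : MvPolynomial (Fin n) F :=
  MvPolynomial.coeff β
    (MvPolynomial.eval₂ ((MvPolynomial.C).comp (MvPolynomial.C))
      (fun i => MvPolynomial.C (MvPolynomial.X i) + MvPolynomial.X i) P)

/-- The multiplicity of `P` at a point `a`: the largest `M` such that all Hasse derivatives of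
order `< M` vanish at `a` (`∞` if no largest such `M` exists). -/
noncomputable def mult {F : Type*} [CommRing F] {n : ℕ}
    (P : MvPolynomial (Fin n) F) (a : Fin n → F) : ℕ∞ :=
  sSup {M : ℕ∞ | ∀ β : Fin n →₀ ℕ, ((∑ i, β i : ℕ) : ℕ∞) < M →
    MvPolynomial.eval a (hasseDeriv β P) = 0}

/-!
The Hasse derivatives of `P` at `a` are the coefficients of the Taylor expansion `P(a + y)`, and
`P` has multiplicity at least `m` at `a` exactly when this expansion lies in the `m`-th power of the
ideal of the variables. Hence substituting a polynomial map does not lower multiplicities, while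
`P^{(β)}` loses at most `|β|` in multiplicity and at least `|β|` in degree. With `w = |β|`, the
polynomial `P^{(β)}(a + ρ (s, g(s)))` therefore has degree at most `ℓ (D - w)` and vanishes on the
whole grid with multiplicity `M - w`, which forces it to be zero because
`ℓ (D - w) < (M - w) q`.

The last implication is the Schwartz–Zippel lemma with multiplicities, proved following Ball and
Serra. Let `G i` be the univariate polynomial in `X i` with zero set `S`. If `P` vanishes on the
grid `Sᴺ` with multiplicity at least `d`, then `P = ∑ h_e G^e` over `|e| = d`, with
`deg h_e ≤ deg P - d |S|`. At a point of the grid the terms of degree `d` of the Taylor expansion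
of `P` are nonzero multiples of the values of the `h_e`, so a higher multiplicity makes every `h_e`
vanish on the grid, and the Combinatorial Nullstellensatz yields the same expansion with `d + 1` in
place of `d`. For `d = ⌊deg P / |S|⌋` the `h_e` have degree less than `|S|`, so they vanish
identically as soon as they vanish on the grid.
-/

section TaylorAt

variable {σ R A B : Type*} [CommSemiring R] [CommSemiring A] [Algebra R A] [CommSemiring B]
  [Algebra R B]

/-- The Taylor expansion `P(a + y)` of `P` at `a`, as a polynomial in `y`. The point may lie in an
`R`-algebra, so that `a = X` gives the generic expansion whose coefficients are the Hasse
derivatives of `P`. -/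
noncomputable def taylorAt (a : σ → A) : MvPolynomial σ R →ₐ[R] MvPolynomial σ A :=
  aeval fun i => C (a i) + X i

lemma taylorAt_X (a : σ → A) (i : σ) : taylorAt a (X i : MvPolynomial σ R) = C (a i) + X i := by
  simp [taylorAt]

lemma map_taylorAt (φ : A →ₐ[R] B) (a : σ → A) (P : MvPolynomial σ R) :
    map (φ : A →+* B) (taylorAt a P) = taylorAt (fun i => φ (a i)) P := by
  suffices (mapAlgHom φ).comp (taylorAt a) = taylorAt (R := R) (fun i => φ (a i)) from
    DFunLike.congr_fun this P
  ext i : 1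
  simp [taylorAt_X]

lemma constantCoeff_taylorAt (a : σ → R) (P : MvPolynomial σ R) :
    constantCoeff (taylorAt a P) = eval a P := by
  induction P using MvPolynomial.induction_on with
  | C r => simp
  | add P Q hP hQ => simp only [map_add, hP, hQ]
  | mul_X P i hP => simp only [map_mul, hP, taylorAt_X, map_add, constantCoeff_C, constantCoeff_X,
      add_zero, eval_X]

lemma coeff_taylorAt_monomial [Fintype σ] (a : σ → A) (α β : σ →₀ ℕ) (c : R) :
    coeff β (taylorAt a (monomial α c)) =
      algebraMap R A c * ∏ i, a i ^ (α i - β i) * (α i).choose (β i) := by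
  classical
  have prod_term (p : σ → ℕ) :
      ∏ i, X i ^ p i * C (a i) ^ (α i - p i) * ((α i).choose (p i) : MvPolynomial σ A) =
        monomial (Finsupp.equivFunOnFinite.symm p)
          (∏ i, a i ^ (α i - p i) * (α i).choose (p i)) := by
    rw [monomial_eq, Finsupp.prod_fintype _ _ (by simp), mul_comm, map_prod,
      ← Finset.prod_mul_distrib]
    simp [mul_assoc]
  have expansion : taylorAt a (monomial α c) = C (algebraMap R A c) *
      ∑ p ∈ Fintype.piFinset fun i => Finset.range (α i + 1),
        monomial (Finsupp.equivFunOnFinite.symm p)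
          (∏ i, a i ^ (α i - p i) * ((α i).choose (p i) : A)) := by
    rw [taylorAt, aeval_monomial, Finsupp.prod_fintype _ _ (by simp)]
    simp_rw [add_comm (C _), add_pow, Finset.prod_univ_sum, prod_term]
    rfl
  rw [expansion, coeff_C_mul, coeff_sum]
  congr 1
  simp only [coeff_monomial, Equiv.symm_apply_eq, Finset.sum_ite_eq']
  split_ifs with hβ
  · rfl
  · obtain ⟨i, hi⟩ : ∃ i, α i < β i := by simpa [Nat.lt_succ_iff] using hβ
    exact (Finset.prod_eq_zero (Finset.mem_univ i) (by simp [Nat.choose_eq_zero_of_lt hi])).symm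

lemma taylorAt_aeval {τ R : Type*} [CommRing R] (γ : σ → MvPolynomial τ R) (b : τ → R)
    (P : MvPolynomial σ R) :
    taylorAt b (aeval γ P) =
      aeval (fun i => taylorAt b (γ i) - C (eval b (γ i)))
        (taylorAt (fun i => eval b (γ i)) P) := by
  suffices (taylorAt b).comp (aeval γ) = (aeval fun i => taylorAt b (γ i) - C (eval b (γ i))).comp
      (taylorAt (R := R) fun i => eval b (γ i)) from DFunLike.congr_fun this P
  ext i : 1
  simp [taylorAt_X, algebraMap_eq]

end TaylorAt

section HasseDeriv

variable {R : Type*} [CommRing R] {n : ℕ}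

lemma hasseDeriv_eq_coeff_taylorAt_X (β : Fin n →₀ ℕ) (P : MvPolynomial (Fin n) R) :
    hasseDeriv β P = coeff β (taylorAt X P) :=
  rfl

lemma hasseDeriv_monomial (α β : Fin n →₀ ℕ) (c : R) :
    hasseDeriv β (monomial α c) = monomial (α - β) (c * ∏ i, ((α i).choose (β i) : R)) := by
  rw [hasseDeriv_eq_coeff_taylorAt_X, coeff_taylorAt_monomial, monomial_eq,
    Finsupp.prod_fintype _ _ (by simp), Finset.prod_mul_distrib]
  simp [algebraMap_eq, mul_comm, mul_left_comm]

lemma coeff_hasseDeriv (β δ : Fin n →₀ ℕ) (P : MvPolynomial (Fin n) R) :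
    coeff δ (hasseDeriv β P) = coeff (δ + β) P * ∏ i, ((δ i + β i).choose (β i) : R) := by
  induction P using MvPolynomial.induction_on' with
  | monomial α c =>
    rw [hasseDeriv_monomial, coeff_monomial, coeff_monomial]
    by_cases hβ : β ≤ α
    · by_cases hα : α = δ + β
      · simp [hα]
      · rw [if_neg hα, if_neg fun h => hα (by rw [← h, tsub_add_cancel_of_le hβ]), zero_mul]
    · obtain ⟨i, hi⟩ : ∃ i, α i < β i := by simpa [Finsupp.le_def] using hβ
      rw [Finset.prod_eq_zero (Finset.mem_univ i) (by simp [Nat.choose_eq_zero_of_lt hi]),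
        if_neg fun h : α = δ + β => hβ (h ▸ le_add_self), mul_zero, ite_self, zero_mul]
  | add P Q hP hQ =>
    rw [coeff_add, add_mul, ← hP, ← hQ, ← coeff_add]
    simp only [hasseDeriv_eq_coeff_taylorAt_X, map_add, coeff_add]

lemma eval_hasseDeriv (a : Fin n → R) (β : Fin n →₀ ℕ) (P : MvPolynomial (Fin n) R) :
    eval a (hasseDeriv β P) = coeff β (taylorAt a P) := by
  have specialize_X : map (eval a) (taylorAt X P) = taylorAt a P := by
    simpa [coe_aeval_eq_eval] using map_taylorAt (aeval a) X P
  rw [← specialize_X, coeff_map, hasseDeriv_eq_coeff_taylorAt_X]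

lemma taylorAt_hasseDeriv (a : Fin n → R) (β : Fin n →₀ ℕ) (P : MvPolynomial (Fin n) R) :
    taylorAt a (hasseDeriv β P) = hasseDeriv β (taylorAt a P) := by
  have taylorAt_comm : map (taylorAt (R := R) a).toRingHom (taylorAt X P) =
      taylorAt X (taylorAt a P) := by
    suffices taylorAt (fun i => taylorAt a (X i)) = (taylorAt X).comp (taylorAt (R := R) a) from
      (map_taylorAt (taylorAt a) X P).trans (DFunLike.congr_fun this P)
    ext i : 1
    simp [taylorAt_X, algebraMap_eq, add_assoc]
  rw [hasseDeriv_eq_coeff_taylorAt_X, hasseDeriv_eq_coeff_taylorAt_X, ← taylorAt_comm, coeff_map]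
  rfl

lemma totalDegree_hasseDeriv_add_degree_le {β : Fin n →₀ ℕ} {P : MvPolynomial (Fin n) R}
    (h : hasseDeriv β P ≠ 0) : (hasseDeriv β P).totalDegree + β.degree ≤ P.totalDegree := by
  obtain ⟨δ, hδ, hdeg⟩ := Finset.exists_mem_eq_sup _ (support_nonempty.mpr h) fun δ => δ.degree
  have hcoeff : coeff (δ + β) P ≠ 0 := by
    rw [mem_support_iff, coeff_hasseDeriv] at hδ
    exact left_ne_zero_of_mul hδ
  calc (hasseDeriv β P).totalDegree + β.degree = (δ + β).degree := by
        rw [map_add, ← hdeg]; rfl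
    _ ≤ P.totalDegree := le_totalDegree (mem_support_iff.mpr hcoeff)

lemma hasseDeriv_mem_pow_idealOfVars {m : ℕ} {P : MvPolynomial (Fin n) R}
    (h : P ∈ idealOfVars (Fin n) R ^ m) (β : Fin n →₀ ℕ) :
    hasseDeriv β P ∈ idealOfVars (Fin n) R ^ (m - β.degree) := by
  rw [mem_pow_idealOfVars_iff'] at h ⊢
  intro δ hδ
  rw [coeff_hasseDeriv, h (δ + β) (by rw [map_add]; lia), zero_mul]

end HasseDeriv

section Mult

variable {R : Type*} [CommRing R] {n N : ℕ}

lemma natCast_le_mult_iff {m : ℕ} {P : MvPolynomial (Fin n) R} {a : Fin n → R} :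
    (m : ℕ∞) ≤ mult P a ↔ taylorAt a P ∈ idealOfVars (Fin n) R ^ m := by
  simp only [mem_pow_idealOfVars_iff', ← eval_hasseDeriv, Finsupp.degree_eq_sum]
  refine ⟨fun h β hβ => ?_, fun h => le_sSup fun β hβ => h β (by exact_mod_cast hβ)⟩
  obtain ⟨_, hvanish, hlt⟩ := lt_sSup_iff.mp ((Nat.cast_lt.mpr hβ).trans_le h)
  exact hvanish β hlt

lemma mult_le_mult_hasseDeriv_add_degree (P : MvPolynomial (Fin n) R) (a : Fin n → R)
    (β : Fin n →₀ ℕ) : mult P a ≤ mult (hasseDeriv β P) a + β.degree := by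
  refine ENat.forall_natCast_le_iff_le.mp fun m hm => ?_
  have hmem := hasseDeriv_mem_pow_idealOfVars (natCast_le_mult_iff.mp hm) β
  rw [← taylorAt_hasseDeriv, ← natCast_le_mult_iff] at hmem
  calc (m : ℕ∞) ≤ (m - β.degree : ℕ) + β.degree := by exact_mod_cast le_tsub_add
    _ ≤ mult (hasseDeriv β P) a + β.degree := by gcongr

lemma mult_le_mult_aeval (γ : Fin n → MvPolynomial (Fin N) R) (P : MvPolynomial (Fin n) R)
    (b : Fin N → R) : mult P (fun i => eval b (γ i)) ≤ mult (aeval γ P) b := by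
  refine ENat.forall_natCast_le_iff_le.mp fun m hm => ?_
  rw [natCast_le_mult_iff] at hm ⊢
  rw [taylorAt_aeval]
  have map_le : (idealOfVars (Fin n) R).map (aeval fun i => taylorAt b (γ i) - C (eval b (γ i))) ≤
      idealOfVars (Fin N) R := by
    rw [Ideal.map_span, Ideal.span_le]
    rintro _ ⟨_, ⟨i, rfl⟩, rfl⟩
    rw [SetLike.mem_coe, aeval_X, ← pow_one (idealOfVars (Fin N) R), mem_pow_idealOfVars_iff']
    intro β hβ
    obtain rfl : β = 0 := by simpa [Finsupp.degree_eq_zero_iff] using hβ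
    rw [coeff_sub, coeff_zero_C, ← constantCoeff_eq, constantCoeff_taylorAt, sub_self]
  have := Ideal.mem_map_of_mem (aeval fun i => taylorAt b (γ i) - C (eval b (γ i))) hm
  rw [Ideal.map_pow] at this
  exact Ideal.pow_right_mono map_le m this

end Mult

lemma totalDegree_aeval_le {σ τ R : Type*} [CommSemiring R] {ℓ : ℕ} {γ : σ → MvPolynomial τ R}
    (hγ : ∀ i, (γ i).totalDegree ≤ ℓ) (P : MvPolynomial σ R) :
    (aeval γ P).totalDegree ≤ ℓ * P.totalDegree := by
  rw [aeval_def, eval₂_eq]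
  refine totalDegree_finsetSum_le fun α hα => ?_
  calc (algebraMap R (MvPolynomial τ R) (coeff α P) * ∏ i ∈ α.support, γ i ^ α i).totalDegree
      ≤ (∏ i ∈ α.support, γ i ^ α i).totalDegree := by
        simpa [algebraMap_eq] using totalDegree_mul (C (coeff α P)) (∏ i ∈ α.support, γ i ^ α i)
    _ ≤ ∑ i ∈ α.support, (γ i ^ α i).totalDegree := totalDegree_finsetProd _ _
    _ ≤ ∑ i ∈ α.support, ℓ * α i := Finset.sum_le_sum fun i _ =>
        (totalDegree_pow _ _).trans ((Nat.mul_le_mul_left _ (hγ i)).trans_eq (mul_comm _ _))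
    _ = ℓ * α.degree := (Finset.mul_sum _ _ _).symm
    _ ≤ ℓ * P.totalDegree := Nat.mul_le_mul_left _ (le_totalDegree hα)

section SchwartzZippel

variable {σ R : Type*} [CommRing R]

lemma coeff_eval_X_mul {R : Type*} [CommSemiring R] {d : ℕ}
    {H : MvPolynomial σ (MvPolynomial σ R)} (hH : H.IsHomogeneous d)
    (w : σ → MvPolynomial σ R) {e : σ →₀ ℕ} (he : e.degree = d) :
    coeff e (eval (fun i => X i * w i) H) =
      constantCoeff (coeff e H) * e.prod fun i k => constantCoeff (w i) ^ k := by
  have term (α : σ →₀ ℕ) : coeff α H * ∏ i ∈ α.support, (X i * w i) ^ α i =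
      monomial α 1 * (coeff α H * α.prod fun i k => w i ^ k) := by
    rw [monomial_eq, C_1, one_mul, mul_left_comm, Finsupp.prod, Finsupp.prod,
      ← Finset.prod_mul_distrib]
    simp_rw [mul_pow]
  rw [eval_eq, coeff_sum, Finset.sum_eq_single e]
  · rw [term, coeff_monomial_mul']
    simp [← constantCoeff_eq, Finsupp.prod]
  · -- Since `H` is homogeneous, `e` is the only exponent of `H` that divides `e`.
    intro α hα hne
    have not_le : ¬ α ≤ e := fun hle => hne <| by
      have hα_deg : d = α.degree := hH.degree_eq_sum_deg_support hα
      have hdeg : α.degree + (e - α).degree = α.degree := by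
        rw [← map_add, add_tsub_cancel_of_le hle, he, hα_deg]
      have hsub : e - α = 0 := (Finsupp.degree_eq_zero_iff _).mp (by lia)
      exact hle.antisymm (tsub_eq_zero_iff_le.mp hsub)
    rw [term, coeff_monomial_mul', if_neg not_le]
  · intro h
    rw [notMem_support_iff.mp h, zero_mul, coeff_zero]

lemma coeff_taylorAt_eval_X_sub_C_mul {d : ℕ} {H : MvPolynomial σ (MvPolynomial σ R)}
    (hH : H.IsHomogeneous d) (a : σ → R) (w : σ → MvPolynomial σ R) {e : σ →₀ ℕ}
    (he : e.degree = d) :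
    coeff e (taylorAt a (eval (fun i => (X i - C (a i)) * w i) H)) =
      eval a (coeff e H) * e.prod fun i k => eval a (w i) ^ k := by
  have shifted : taylorAt a (eval (fun i => (X i - C (a i)) * w i) H) =
      eval (fun i => X i * taylorAt a (w i)) (map (taylorAt (R := R) a).toRingHom H) := by
    rw [eval_map]
    refine (eval₂_comp (taylorAt (R := R) a).toRingHom _ H).trans ?_
    congr 1
    ext1 i
    simp [taylorAt_X]
  rw [shifted, coeff_eval_X_mul (hH.map _) _ he, coeff_map]
  simp [constantCoeff_taylorAt]

/-- The univariate polynomial `∏ s ∈ S, (t - s)` with zero set `S`, in the variable `X i`. -/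
noncomputable def gridPoly (S : Finset R) (i : σ) : MvPolynomial σ R :=
  ∏ s ∈ S, (X i - C s)

lemma one_le_totalDegree_X_sub_C [Nontrivial R] (i : σ) (s : R) :
    1 ≤ (X i - C s : MvPolynomial σ R).totalDegree := by
  classical
  have hcoeff : coeff (Finsupp.single i 1) (X i - C s) = 1 := by
    rw [coeff_sub, coeff_X, if_pos rfl, coeff_C,
      if_neg (Finsupp.single_ne_zero.mpr one_ne_zero).symm, sub_zero]
  have hsupport : Finsupp.single i 1 ∈ (X i - C s).support :=
    mem_support_iff.mpr (hcoeff.trans_ne one_ne_zero)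
  simpa only [Finsupp.sum_single_index] using le_totalDegree hsupport

lemma X_sub_C_ne_zero [Nontrivial R] (i : σ) (s : R) : (X i - C s : MvPolynomial σ R) ≠ 0 :=
  fun h => by simpa [h] using one_le_totalDegree_X_sub_C i s

variable [IsDomain R] {N : ℕ}

lemma gridPoly_ne_zero (S : Finset R) (i : σ) : gridPoly S i ≠ 0 :=
  Finset.prod_ne_zero_iff.mpr fun s _ => X_sub_C_ne_zero i s

lemma card_le_totalDegree_gridPoly (S : Finset R) (i : σ) :
    S.card ≤ (gridPoly S i).totalDegree := by
  classical
  induction S using Finset.induction_on with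
  | empty => simp
  | insert s S hs ih =>
    have gridPoly_insert : gridPoly (insert s S) i = gridPoly S i * (X i - C s) := by
      rw [gridPoly, Finset.prod_insert hs, mul_comm, gridPoly]
    rw [gridPoly_insert, Finset.card_insert_of_notMem hs,
      totalDegree_mul_of_isDomain (gridPoly_ne_zero S i) (X_sub_C_ne_zero i s)]
    exact add_le_add ih (one_le_totalDegree_X_sub_C i s)

lemma eval_coeff_eq_zero_of_lt_mult {S : Finset R} {d : ℕ}
    {H : MvPolynomial (Fin N) (MvPolynomial (Fin N) R)} (hH : H.IsHomogeneous d)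
    {a : Fin N → R} (ha : ∀ i, a i ∈ S) (hmult : (d : ℕ∞) < mult (eval (gridPoly S) H) a)
    (e : Fin N →₀ ℕ) : eval a (coeff e H) = 0 := by
  classical
  by_cases he : e.degree = d
  · have factor : gridPoly S = fun i => (X i - C (a i)) * gridPoly (S.erase (a i)) i :=
      funext fun i => (Finset.mul_prod_erase S _ (ha i)).symm
    have cofactor_ne_zero : (e.prod fun i k => eval a (gridPoly (S.erase (a i)) i) ^ k) ≠ 0 := by
      refine Finset.prod_ne_zero_iff.mpr fun i _ => pow_ne_zero _ ?_
      rw [gridPoly, map_prod, Finset.prod_ne_zero_iff]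
      intro s hs
      simpa [sub_eq_zero] using (Finset.ne_of_mem_erase hs).symm
    have hmem : taylorAt a (eval (gridPoly S) H) ∈ idealOfVars (Fin N) R ^ (d + 1) :=
      natCast_le_mult_iff.mp (by exact_mod_cast Order.add_one_le_of_lt hmult)
    have hcoeff := (mem_pow_idealOfVars_iff' _ _).mp hmem e (by lia)
    rw [factor, coeff_taylorAt_eval_X_sub_C_mul hH a _ he] at hcoeff
    exact (mul_eq_zero.mp hcoeff).resolve_right cofactor_ne_zero
  · rw [hH.coeff_eq_zero he, map_zero]

lemma exists_eq_sum_gridPoly_mul {S : Finset R} (hS : S.Nonempty) {f : MvPolynomial (Fin N) R}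
    (hf : ∀ a : Fin N → R, (∀ i, a i ∈ S) → eval a f = 0) :
    ∃ h : Fin N → MvPolynomial (Fin N) R, f = ∑ i, h i * gridPoly S i ∧
      ∀ i, (h i).totalDegree ≤ f.totalDegree - S.card := by
  obtain ⟨h, hdeg, hsum⟩ :=
    combinatorial_nullstellensatz_exists_linearCombination (fun _ => S) (fun _ => hS) f hf
  refine ⟨h, ?_, fun i => ?_⟩
  · rw [hsum, Finsupp.linearCombination_apply, Finsupp.sum_fintype _ _ (by simp)]
    rfl
  · rcases eq_or_ne (h i) 0 with hi | hi
    · simp [hi]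
    have hdegi : (gridPoly S i * h i).totalDegree ≤ f.totalDegree := hdeg i
    rw [totalDegree_mul_of_isDomain (gridPoly_ne_zero S i) hi] at hdegi
    have := card_le_totalDegree_gridPoly S i
    lia

lemma exists_isHomogeneous_succ_eval_gridPoly_eq {S : Finset R} (hS : S.Nonempty) {d D : ℕ}
    {H : MvPolynomial (Fin N) (MvPolynomial (Fin N) R)} (hH : H.IsHomogeneous d)
    (hdeg : ∀ e, (coeff e H).totalDegree ≤ D)
    (hvanish : ∀ e, ∀ a : Fin N → R, (∀ i, a i ∈ S) → eval a (coeff e H) = 0) :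
    ∃ H' : MvPolynomial (Fin N) (MvPolynomial (Fin N) R), H'.IsHomogeneous (d + 1) ∧
      (∀ e, (coeff e H').totalDegree ≤ D - S.card) ∧
      eval (gridPoly S) H' = eval (gridPoly S) H := by
  choose h hsum hhdeg using fun e => exists_eq_sum_gridPoly_mul hS (hvanish e)
  refine ⟨∑ e ∈ H.support, ∑ i, monomial (e + Finsupp.single i 1) (h e i), ?_, fun e' => ?_, ?_⟩
  · refine .sum _ _ _ fun e he => .sum _ _ _ fun i _ => isHomogeneous_monomial _ ?_
    rw [map_add, Finsupp.degree_single, hH.degree_eq_sum_deg_support he]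
    rfl
  · simp only [coeff_sum, coeff_monomial]
    refine totalDegree_finsetSum_le fun e _ => totalDegree_finsetSum_le fun i _ => ?_
    split_ifs
    · exact (hhdeg e i).trans (tsub_le_tsub_right (hdeg e) _)
    · simp
  · conv_rhs => rw [H.as_sum]
    simp only [map_sum]
    refine Finset.sum_congr rfl fun e _ => ?_
    conv_rhs => rw [hsum e, eval_monomial, Finset.sum_mul]
    refine Finset.sum_congr rfl fun i _ => ?_
    rw [eval_monomial, Finsupp.prod_add_index' (by simp) (by simp [pow_add]),
      Finsupp.prod_single_index (by simp)]
    ring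

lemma exists_isHomogeneous_eval_gridPoly_eq {S : Finset R} (hS : S.Nonempty)
    (P : MvPolynomial (Fin N) R) (d : ℕ)
    (hP : ∀ a : Fin N → R, (∀ i, a i ∈ S) → (d : ℕ∞) ≤ mult P a) :
    ∃ H : MvPolynomial (Fin N) (MvPolynomial (Fin N) R), H.IsHomogeneous d ∧
      (∀ e, (coeff e H).totalDegree ≤ P.totalDegree - d * S.card) ∧ eval (gridPoly S) H = P := by
  induction d with
  | zero =>
    refine ⟨C P, isHomogeneous_C _ _, fun e => ?_, eval_C _⟩
    rw [coeff_C]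
    split_ifs <;> simp
  | succ d ih =>
    have lt_mult (a : Fin N → R) (ha : ∀ i, a i ∈ S) : (d : ℕ∞) < mult P a :=
      (Nat.cast_lt.mpr d.lt_succ_self).trans_le (hP a ha)
    obtain ⟨H, hH, hdeg, rfl⟩ := ih fun a ha => (lt_mult a ha).le
    rw [add_one_mul, ← tsub_tsub]
    exact exists_isHomogeneous_succ_eval_gridPoly_eq hS hH hdeg fun e a ha =>
      eval_coeff_eq_zero_of_lt_mult hH ha (lt_mult a ha) e

theorem mul_card_le_totalDegree_of_le_mult {P : MvPolynomial (Fin N) R} (hP : P ≠ 0)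
    (S : Finset R) (m : ℕ) (hmult : ∀ a : Fin N → R, (∀ i, a i ∈ S) → (m : ℕ∞) ≤ mult P a) :
    m * S.card ≤ P.totalDegree := by
  rcases S.eq_empty_or_nonempty with rfl | hS
  · simp
  by_contra! hlt
  set d := P.totalDegree / S.card
  have hd : (d : ℕ∞) < m := by exact_mod_cast Nat.div_lt_of_lt_mul (by rwa [mul_comm])
  obtain ⟨H, hH, hdeg, rfl⟩ :=
    exists_isHomogeneous_eval_gridPoly_eq hS P d fun a ha => hd.le.trans (hmult a ha)
  have coeff_eq_zero (e : Fin N →₀ ℕ) : coeff e H = 0 := by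
    refine eq_zero_of_eval_zero_at_prod_finset _ (fun _ => S) (fun i => ?_) fun a ha =>
      eval_coeff_eq_zero_of_lt_mult hH ha (hd.trans_le (hmult a ha)) e
    calc degreeOf i (coeff e H) ≤ (coeff e H).totalDegree := degreeOf_le_totalDegree _ _
      _ ≤ (eval (gridPoly S) H).totalDegree - d * S.card := hdeg e
      _ = (eval (gridPoly S) H).totalDegree % S.card := (Nat.mod_eq_sub_div_mul ..).symm
      _ < S.card := Nat.mod_lt _ hS.card_pos
  exact hP (by rw [show H = 0 from MvPolynomial.ext _ _ fun e => by simp [coeff_eq_zero], map_zero])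

end SchwartzZippel

theorem hasse_derivs_vanish_on_curve_general {R : Type*} [CommRing R] [IsDomain R] {n N ℓ : ℕ}
    (γ : Fin n → MvPolynomial (Fin N) R) (hγ : ∀ i, (γ i).totalDegree ≤ ℓ) (S : Finset R)
    {D M : ℕ} (β : Fin n →₀ ℕ)
    (hDM : (ℓ : ℤ) * ((D : ℤ) - β.degree) < ((M : ℤ) - β.degree) * S.card)
    (P : MvPolynomial (Fin n) R) (hPD : P.totalDegree ≤ D)
    (hPS : ∀ b : Fin N → R, (∀ i, b i ∈ S) → (M : ℕ∞) ≤ mult P fun i => eval b (γ i)) :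
    aeval γ (hasseDeriv β P) = 0 := by
  by_contra hne
  have hderiv : (hasseDeriv β P).totalDegree + β.degree ≤ P.totalDegree :=
    totalDegree_hasseDeriv_add_degree_le fun h => hne (by rw [h, map_zero])
  have hmult (b : Fin N → R) (hb : ∀ i, b i ∈ S) :
      ((M - β.degree : ℕ) : ℕ∞) ≤ mult (aeval γ (hasseDeriv β P)) b := by
    rw [ENat.natCast_sub, tsub_le_iff_right]
    calc (M : ℕ∞) ≤ mult P fun i => eval b (γ i) := hPS b hb
      _ ≤ mult (hasseDeriv β P) (fun i => eval b (γ i)) + β.degree :=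
        mult_le_mult_hasseDeriv_add_degree ..
      _ ≤ mult (aeval γ (hasseDeriv β P)) b + β.degree := by
        gcongr
        exact mult_le_mult_aeval ..
  have hle : (M - β.degree) * S.card ≤ ℓ * (D - β.degree) :=
    calc (M - β.degree) * S.card ≤ (aeval γ (hasseDeriv β P)).totalDegree :=
          mul_card_le_totalDegree_of_le_mult hne S _ hmult
      _ ≤ ℓ * (hasseDeriv β P).totalDegree := totalDegree_aeval_le hγ _
      _ ≤ ℓ * (D - β.degree) := by gcongr; lia
  refine hDM.not_ge ?_
  calc ((M : ℤ) - β.degree) * S.card ≤ (M - β.degree : ℕ) * S.card := by gcongr; lia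
    _ ≤ ℓ * (D - β.degree : ℕ) := by exact_mod_cast hle
    _ = ℓ * ((D : ℤ) - β.degree) := by rw [Nat.cast_sub (by lia)]

section ScaledGraph

variable {R : Type*} [CommRing R] {n : ℕ}

/-- The polynomial parametrisation `s ↦ a + ρ (s, g(s))` of the scaled and translated graph
of `g`, the last coordinate being the one that carries `g`. -/
noncomputable def scaledGraph (a : Fin n → R) (ρ : R) (g : MvPolynomial (Fin (n - 1)) R) :
    Fin n → MvPolynomial (Fin (n - 1)) R :=
  fun i => C (a i) + C ρ * (if hi : (i : ℕ) < n - 1 then X ⟨i, hi⟩ else g)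

lemma totalDegree_scaledGraph_le {ℓ : ℕ} {g : MvPolynomial (Fin (n - 1)) R}
    (hℓ : 1 ≤ ℓ) (hg : g.totalDegree ≤ ℓ) (a : Fin n → R) (ρ : R) (i : Fin n) :
    (scaledGraph a ρ g i).totalDegree ≤ ℓ := by
  refine (totalDegree_add _ _).trans (max_le (by simp) ((totalDegree_mul _ _).trans ?_))
  rw [totalDegree_C, zero_add]
  split_ifs
  · exact (isHomogeneous_X R _).totalDegree_le.trans hℓ
  · exact hg

lemma eval_scaledGraph (a : Fin n → R) (ρ : R) (g : MvPolynomial (Fin (n - 1)) R)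
    (b : Fin (n - 1) → R) (i : Fin n) :
    eval b (scaledGraph a ρ g i) =
      a i + ρ * (if hi : (i : ℕ) < n - 1 then b ⟨i, hi⟩ else eval b g) := by
  rw [scaledGraph]
  split_ifs <;> simp

end ScaledGraph

/-- Lemma 2.7: let `2 ≤ ℓ < q`, `g ∈ F_q[x_1,…,x_{n-1}]` of degree `ℓ`, and
`C = {a + ρ(λ, g(λ)) : λ ∈ F_q^{n-1}}`. Let `k, D, M` satisfy `ℓ(D-w) < (M-w)q` for all
`0 ≤ w < k`. If `P` is a nonzero polynomial of degree at most `D` vanishing on `C` with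
multiplicity `M`, then for every `β` with `|β| < k`, the polynomial
`P_{β,ρ}(s) = P^{(β)}(a + ρ(s, g(s)))` is the zero polynomial. -/
theorem hasse_derivs_vanish_on_curve {F : Type*} [Field F] [Fintype F] (q n ℓ : ℕ)
    (hq : Fintype.card F = q) (hn : 2 ≤ n) (hℓ : 2 ≤ ℓ) (hℓq : ℓ < q)
    (g : MvPolynomial (Fin (n - 1)) F) (hg : g.totalDegree = ℓ)
    (ρ : F) (a : Fin n → F) (k D M : ℕ)
    (hMD : ∀ w : ℕ, w < k → (ℓ : ℤ) * ((D : ℤ) - (w : ℤ)) < ((M : ℤ) - (w : ℤ)) * (q : ℤ))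
    (P : MvPolynomial (Fin n) F) (hP0 : P ≠ 0) (hPD : P.totalDegree ≤ D)
    (hPC : ∀ lam : Fin (n - 1) → F, (M : ℕ∞) ≤
      mult P (fun i : Fin n => a i + ρ *
        (if hi : (i : ℕ) < n - 1 then lam ⟨i, hi⟩ else MvPolynomial.eval lam g)))
    (β : Fin n →₀ ℕ) (hβ : (∑ i : Fin n, β i) < k) :
    MvPolynomial.aeval (fun i : Fin n =>
        MvPolynomial.C (a i) + MvPolynomial.C ρ *
          (if hi : (i : ℕ) < n - 1 then MvPolynomial.X (⟨i, hi⟩ : Fin (n - 1)) else g))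
      (hasseDeriv β P) = 0 :=
  hasse_derivs_vanish_on_curve_general (scaledGraph a ρ g)
    (totalDegree_scaledGraph_le (by lia) hg.le a ρ) Finset.univ β
    (by simpa only [Finset.card_univ, hq, Finsupp.degree_eq_sum] using hMD _ hβ) P hPD
    fun b _ => by simpa only [eval_scaledGraph] using hPC b
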